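/- arXiv:2602.11110 — 2 statements merged into one kernel-verified Lean document; each statement's English description precedes it below -/
import Mathlib

section
/- Let k be a field, K/k a field extension, and G an affine group scheme over k. If V and W are finite-dimensional representations of G over k such that V ⊗_k K and W ⊗_k K are isomorphic as representations of G_K over K, then V and W are isomorphic as representations of G over k. -/
/-!
# Statement 0 (Noether–Deuring for representations of affine group schemes)

An affine group scheme `G` over a field `k` is modeled by its commutative Hopf algebra
`A = k[G]`, and a finite-dimensional representation of `G` over `k` by a finite-dimensional
(right) comodule over `A`.  The base change `G_K` then corepresents on `K ⊗[k] V` via the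
base-changed coaction.  The theorem: if `V ⊗_k K` and `W ⊗_k K` are isomorphic as
representations of `G_K` over `K`, then `V` and `W` are isomorphic as representations of `G`.
-/

open scoped TensorProduct

/-- A comodule over a `k`-coalgebra `A`, i.e. a representation of the affine group scheme
`Spec A` when `A` is a commutative Hopf algebra over `k`. -/
structure CoalgebraComodule (k A V : Type*) [CommRing k]
    [AddCommGroup A] [Module k A] [Coalgebra k A]
    [AddCommGroup V] [Module k V] where
  /-- the coaction map -/
  ρ : V →ₗ[k] V ⊗[k] A
  counit_comp : ∀ v : V,
    (TensorProduct.rid k V)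
      ((TensorProduct.map (LinearMap.id : V →ₗ[k] V) (Coalgebra.counit : A →ₗ[k] k)) (ρ v)) = v
  coassoc : ∀ v : V,
    (TensorProduct.assoc k V A A)
      ((TensorProduct.map ρ (LinearMap.id : A →ₗ[k] A)) (ρ v))
      = (TensorProduct.map (LinearMap.id : V →ₗ[k] V)
          (Coalgebra.comul : A →ₗ[k] A ⊗[k] A)) (ρ v)

/-- The base change to `K` of a coaction `ρ : V →ₗ[k] V ⊗[k] A`: the coaction of the
base-changed group scheme `G_K` on `K ⊗[k] V`, a comodule over `K ⊗[k] A`. -/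
noncomputable def baseChangeCoaction (k K A V : Type*) [CommRing k] [CommRing K] [Algebra k K]
    [AddCommGroup A] [Module k A] [AddCommGroup V] [Module k V]
    (ρ : V →ₗ[k] V ⊗[k] A) :
    (K ⊗[k] V) →ₗ[K] (K ⊗[k] V) ⊗[K] (K ⊗[k] A) :=
  (TensorProduct.AlgebraTensorModule.cancelBaseChange k K K (K ⊗[k] V) A).symm.toLinearMap ∘ₗ
    (TensorProduct.AlgebraTensorModule.assoc k k K K V A).symm.toLinearMap ∘ₗ
      ρ.baseChange K

/-!
Intertwiners are cut out by linear equations, and solution spaces of linear equations commute with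
flat base change: `Hom_G(V, W) ⊗ K = Hom_{G_K}(V_K, W_K)`. Composition with the given isomorphism
`φ : V_K → W_K` therefore carries the scalar extension of `End_G(V)` onto that of `Hom_G(V, W)`, and
it suffices to find an injective map in `Hom_G(V, W)`.

If `k` is infinite, the determinant is a polynomial function on `Hom_G(V, W)` which takes a unit
value at the `K`-point `φ`; hence it is a nonzero polynomial and does not vanish at some `k`-point.

If `k` is finite, count. For every subspace `Y ⊆ V`, restriction to `Y` has the same rank on
`End_G(V)` and on `Hom_G(V, W)`, because ranks can be computed over `K`, where `φ` identifies the
two restriction maps. So both spaces contain the same number of maps killing `Y`, and by Möbius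
inversion over the lattice of subspaces the same number of maps with kernel exactly `0`. The
identity is such a map in `End_G(V)`.
-/

open Module

section IsBaseChange

variable {R S M N M' N' : Type*} [CommRing R] [CommRing S] [Algebra R S]
  [AddCommGroup M] [Module R M] [AddCommGroup N] [Module R N]
  [AddCommMonoid M'] [Module R M'] [Module S M'] [IsScalarTower R S M']
  [AddCommMonoid N'] [Module R N'] [Module S N'] [IsScalarTower R S N']
  {i : M →ₗ[R] M'} {j : N →ₗ[R] N'}

lemma span_map_eq_map_baseChange (hi : IsBaseChange S i) (p : Submodule R M) :
    Submodule.span S (p.map i : Set M') = (p.baseChange S).map hi.equiv.toLinearMap := by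
  rw [Submodule.baseChange_eq_span, Submodule.map_span]
  congr 1
  ext y
  simp [hi.equiv_tmul]

lemma finrank_span_map_of_isBaseChange [Module.Flat R S] [StrongRankCondition R]
    [StrongRankCondition S] (hi : IsBaseChange S i) (p : Submodule R M) [Module.Free R p] :
    finrank S (Submodule.span S (p.map i : Set M')) = finrank R p := by
  rw [span_map_eq_map_baseChange hi]
  exact (LinearEquiv.finrank_map_eq hi.equiv _).trans <|
    (Submodule.toBaseChange.toLinearEquiv S p).finrank_eq.symm.trans finrank_baseChange

lemma eqLocus_eq_span_map_eqLocus [Module.Flat R S] (hi : IsBaseChange S i) (hj : IsBaseChange S j)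
    {f g : M →ₗ[R] N} {f' g' : M' →ₗ[S] N'}
    (hf : ∀ m, f' (i m) = j (f m)) (hg : ∀ m, g' (i m) = j (g m)) :
    LinearMap.eqLocus f' g' = Submodule.span S ((LinearMap.eqLocus f g).map i : Set M') := by
  have comp_equiv {h : M →ₗ[R] N} {h' : M' →ₗ[S] N'} (hh : ∀ m, h' (i m) = j (h m))
      (t : S ⊗[R] M) : h' (hi.equiv t) = hj.equiv (h.baseChange S t) := by
    suffices h' ∘ₗ hi.equiv.toLinearMap = hj.equiv.toLinearMap ∘ₗ h.baseChange S from
      LinearMap.congr_fun this t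
    ext m
    simp [hi.equiv_tmul, hj.equiv_tmul, hh]
  have eqLocus_baseChange : LinearMap.eqLocus (f.baseChange S) (g.baseChange S) =
      (LinearMap.eqLocus f g).baseChange S := Module.Flat.eqLocus_lTensor_eq S S f g
  ext x
  obtain ⟨t, rfl⟩ := hi.equiv.surjective x
  rw [span_map_eq_map_baseChange hi, ← eqLocus_baseChange]
  simp [comp_equiv hf, comp_equiv hg]

end IsBaseChange

section HomBaseChange

variable {R : Type*} (S : Type*) [CommRing R] [CommRing S] [Algebra R S]
  {V V' W : Type*} [AddCommGroup V] [Module R V] [AddCommGroup V'] [Module R V']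
  [AddCommGroup W] [Module R W]

/-- The scalar extension to `S` of a space `L` of `R`-linear maps `V → W`, realised as a space of
`S`-linear maps `S ⊗ V → S ⊗ W`: the `S`-span of the base changes of the members of `L`. -/
def homBaseChange (L : Submodule R (V →ₗ[R] W)) : Submodule S (S ⊗[R] V →ₗ[S] S ⊗[R] W) :=
  Submodule.span S (L.map (LinearMap.baseChangeHom R S V W) : Set (S ⊗[R] V →ₗ[S] S ⊗[R] W))

lemma homBaseChange_map_lcomp (g : V' →ₗ[R] V) (L : Submodule R (V →ₗ[R] W)) :
    homBaseChange S (L.map (g.lcomp R W)) =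
      (homBaseChange S L).map ((g.baseChange S).lcomp S (S ⊗[R] W)) := by
  rw [homBaseChange, homBaseChange, Submodule.map_span]
  congr 1
  ext f
  simp [LinearMap.lcomp_apply', LinearMap.baseChange_comp]

lemma finrank_homBaseChange [Nontrivial R] [Nontrivial S] [Module.Flat R S]
    [Module.FinitePresentation R V] (L : Submodule R (V →ₗ[R] W)) [Module.Free R L] :
    finrank S (homBaseChange S L) = finrank R L :=
  finrank_span_map_of_isBaseChange (Module.FinitePresentation.isBaseChange_map R V W S) L

end HomBaseChange

section RankComparison

variable {k K : Type*} [Field k] [CommRing K] [Nontrivial K] [Algebra k K]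
  {U V V' W : Type*} [AddCommGroup U] [Module k U] [AddCommGroup V] [Module k V]
  [AddCommGroup V'] [Module k V'] [AddCommGroup W] [Module k W]

lemma finrank_eq_of_map_homBaseChange_eq [FiniteDimensional k V]
    {E : Submodule k (V →ₗ[k] U)} {L : Submodule k (V →ₗ[k] W)} (φ : (K ⊗[k] U) ≃ₗ[K] K ⊗[k] W)
    (hφ : (homBaseChange K E).map φ.congrRight.toLinearMap = homBaseChange K L) :
    finrank k E = finrank k L := by
  have := Module.finitePresentation_of_finite k V
  rw [← finrank_homBaseChange K E, ← finrank_homBaseChange K L, ← hφ]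
  exact (LinearEquiv.finrank_map_eq φ.congrRight _).symm

lemma finrank_map_lcomp_eq [FiniteDimensional k V']
    {E : Submodule k (V →ₗ[k] U)} {L : Submodule k (V →ₗ[k] W)} (φ : (K ⊗[k] U) ≃ₗ[K] K ⊗[k] W)
    (hφ : (homBaseChange K E).map φ.congrRight.toLinearMap = homBaseChange K L)
    (g : V' →ₗ[k] V) :
    finrank k (E.map (g.lcomp k U)) = finrank k (L.map (g.lcomp k W)) := by
  refine finrank_eq_of_map_homBaseChange_eq φ ?_
  rw [homBaseChange_map_lcomp, homBaseChange_map_lcomp, ← hφ, ← Submodule.map_comp,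
    ← Submodule.map_comp]
  rfl

end RankComparison

section FiniteField

lemma natCard_le_eq_sum_natCard_fiber {α P : Type*} [Finite α] [PartialOrder P] [OrderTop P]
    [LocallyFiniteOrder P] (f : α → P) (y : P) :
    Nat.card {a // y ≤ f a} = ∑ z ∈ Finset.Ici y, Nat.card {a // f a = z} := by
  classical
  have := Fintype.ofFinite α
  simp only [Nat.card_eq_fintype_card, Fintype.card_subtype]
  rw [Finset.card_eq_sum_card_fiberwise (f := f) (t := Finset.Ici y) fun a ha => by simpa using ha]
  refine Finset.sum_congr rfl fun z hz => ?_
  rw [Finset.filter_filter]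
  congr! 2 with a
  exact and_iff_right_of_imp fun h => h ▸ Finset.mem_Ici.1 hz

lemma natCard_fiber_eq_of_natCard_le_eq {α β P : Type*} [Finite α] [Finite β] [PartialOrder P]
    [OrderTop P] [LocallyFiniteOrder P] {f : α → P} {g : β → P}
    (h : ∀ y, Nat.card {a // y ≤ f a} = Nat.card {b // y ≤ g b}) (y : P) :
    Nat.card {a // f a = y} = Nat.card {b // g b = y} := by
  classical
  have inversion_f := IncidenceAlgebra.moebius_inversion_top
    (fun z => (Nat.card {a // f a = z} : ℤ)) (fun z => (Nat.card {a // z ≤ f a} : ℤ))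
    (fun z => mod_cast natCard_le_eq_sum_natCard_fiber f z) y
  have inversion_g := IncidenceAlgebra.moebius_inversion_top
    (fun z => (Nat.card {b // g b = z} : ℤ)) (fun z => (Nat.card {b // z ≤ g b} : ℤ))
    (fun z => mod_cast natCard_le_eq_sum_natCard_fiber g z) y
  simp only [← h] at inversion_g
  exact_mod_cast inversion_f.trans inversion_g.symm

variable {k : Type*} [Field k]
  {U V W : Type*} [AddCommGroup U] [Module k U] [AddCommGroup V] [Module k V]
  [AddCommGroup W] [Module k W]

lemma natCard_le_ker [FiniteDimensional k V] [FiniteDimensional k W]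
    (L : Submodule k (V →ₗ[k] W)) (Y : Submodule k V) :
    Nat.card {f : L // Y ≤ LinearMap.ker f.1} =
      Nat.card k ^ (finrank k L - finrank k (L.map (Y.subtype.lcomp k W))) := by
  let res : L →ₗ[k] Y →ₗ[k] W := (Y.subtype.lcomp k W).domRestrict L
  have mem_ker_res (f : L) : Y ≤ LinearMap.ker f.1 ↔ f ∈ LinearMap.ker res := by
    simp [res, LinearMap.ext_iff, SetLike.le_def]
  have rank_nullity : finrank k (L.map (Y.subtype.lcomp k W)) + finrank k (LinearMap.ker res) =
      finrank k L := by
    rw [← LinearMap.range_domRestrict L (Y.subtype.lcomp k W)]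
    exact res.finrank_range_add_finrank_ker
  rw [Nat.card_congr (Equiv.subtypeEquivRight mem_ker_res), ← rank_nullity, Nat.add_sub_cancel_left]
  exact Module.natCard_eq_pow_finrank (V := LinearMap.ker res)

lemma exists_injective_mem_of_finite [Finite k] {K : Type*} [CommRing K] [Nontrivial K]
    [Algebra k K] [FiniteDimensional k U] [FiniteDimensional k V] [FiniteDimensional k W]
    {E : Submodule k (V →ₗ[k] U)} {L : Submodule k (V →ₗ[k] W)} (φ : (K ⊗[k] U) ≃ₗ[K] K ⊗[k] W)
    (hφ : (homBaseChange K E).map φ.congrRight.toLinearMap = homBaseChange K L)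
    (hE : ∃ f ∈ E, Function.Injective f) : ∃ f ∈ L, Function.Injective f := by
  classical
  have : Finite V := Module.finite_of_finite k
  have := Fintype.ofFinite (Submodule k V)
  let := Fintype.toLocallyFiniteOrder (α := Submodule k V)
  have : Finite E := Module.finite_of_finite k
  have : Finite L := Module.finite_of_finite k
  have card_le_ker_eq (Y : Submodule k V) :
      Nat.card {f : E // Y ≤ LinearMap.ker f.1} = Nat.card {f : L // Y ≤ LinearMap.ker f.1} := by
    rw [natCard_le_ker, natCard_le_ker, finrank_eq_of_map_homBaseChange_eq φ hφ,
      finrank_map_lcomp_eq φ hφ]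
  have card_injective_eq := natCard_fiber_eq_of_natCard_le_eq card_le_ker_eq ⊥
  obtain ⟨f, hf, f_injective⟩ := hE
  have : Nonempty {f : E // LinearMap.ker f.1 = ⊥} :=
    ⟨⟨f, hf⟩, LinearMap.ker_eq_bot.2 f_injective⟩
  obtain ⟨⟨g, hg⟩, ker_g⟩ := (Nat.card_pos_iff.1 (card_injective_eq ▸ Nat.card_pos)).1
  exact ⟨g, hg, LinearMap.ker_eq_bot.1 ker_g⟩

end FiniteField

section InfiniteField

lemma exists_det_sum_smul_ne_zero {R S ι n : Type*} [CommRing R] [IsDomain R] [Infinite R]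
    [CommRing S] [Algebra R S] [Fintype ι] [Fintype n] [DecidableEq n] (M : ι → Matrix n n R)
    (c : ι → S) (hc : (∑ i, c i • (M i).map (algebraMap R S)).det ≠ 0) :
    ∃ x : ι → R, (∑ i, x i • M i).det ≠ 0 := by
  let P : MvPolynomial ι R :=
    (∑ i, (MvPolynomial.X i : MvPolynomial ι R) • (M i).map MvPolynomial.C).det
  have aeval_P : MvPolynomial.aeval c P = (∑ i, c i • (M i).map (algebraMap R S)).det := by
    rw [AlgHom.map_det, map_sum]
    congr 1
    ext a b
    simp [Matrix.sum_apply]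
  have eval_P (x : ι → R) : MvPolynomial.eval x P = (∑ i, x i • M i).det := by
    rw [RingHom.map_det, map_sum]
    congr 1
    ext a b
    simp [Matrix.sum_apply]
  by_contra! eval_eq_zero
  have P_eq_zero : P = 0 := MvPolynomial.funext fun x => by rw [eval_P, eval_eq_zero, map_zero]
  exact hc (by rw [← aeval_P, P_eq_zero, map_zero])

lemma exists_injective_mem_of_infinite {k K V W : Type*} [Field k] [Infinite k] [CommRing K]
    [Nontrivial K] [Algebra k K] [AddCommGroup V] [Module k V] [FiniteDimensional k V]
    [AddCommGroup W] [Module k W] [FiniteDimensional k W] {L : Submodule k (V →ₗ[k] W)}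
    (φ : (K ⊗[k] V) ≃ₗ[K] K ⊗[k] W) (hφ : φ.toLinearMap ∈ homBaseChange K L) :
    ∃ f ∈ L, Function.Injective f := by
  obtain ⟨n, c, F, sum_eq⟩ := Submodule.mem_span_set'.1 hφ
  choose f f_mem hf using fun i => (F i).2
  have finrank_eq : finrank k W = finrank k V := by
    rw [← finrank_baseChange (R := K), ← φ.finrank_eq, finrank_baseChange]
  let bV := finBasis k V
  let bW := (finBasis k W).reindex (finCongr finrank_eq)
  have det_ne_zero :
      (∑ i, c i • (LinearMap.toMatrix bV bW (f i)).map (algebraMap k K)).det ≠ 0 := by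
    have toMatrix_φ : ∑ i, c i • (LinearMap.toMatrix bV bW (f i)).map (algebraMap k K) =
        LinearMap.toMatrix (Algebra.TensorProduct.basis K bV)
          (Algebra.TensorProduct.basis K bW) φ.toLinearMap := by
      simp [← sum_eq, ← hf, LinearMap.toMatrix_baseChange]
    rw [toMatrix_φ]
    exact (LinearEquiv.isUnit_det φ _ _).ne_zero
  obtain ⟨x, hx⟩ := exists_det_sum_smul_ne_zero _ c det_ne_zero
  have toMatrix_sum : ∑ i, x i • LinearMap.toMatrix bV bW (f i) =
      LinearMap.toMatrix bV bW (∑ i, x i • f i) := by simp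
  exact ⟨∑ i, x i • f i, L.sum_mem fun i _ => L.smul_mem _ (f_mem i),
    (LinearEquiv.ofIsUnitDet (toMatrix_sum ▸ hx.isUnit)).injective⟩

end InfiniteField

section Intertwiners

variable {R A U V W : Type*} [CommRing R] [AddCommGroup A] [Module R A]
  [AddCommGroup U] [Module R U] [AddCommGroup V] [Module R V] [AddCommGroup W] [Module R W]

/-- The space of linear maps `V → W` commuting with the given coactions. -/
def intertwiners (ρV : V →ₗ[R] V ⊗[R] A) (ρW : W →ₗ[R] W ⊗[R] A) : Submodule R (V →ₗ[R] W) :=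
  LinearMap.eqLocus (LinearMap.llcomp R V W (W ⊗[R] A) ρW)
    (ρV.lcomp R (W ⊗[R] A) ∘ₗ LinearMap.rTensorHom A)

variable {ρU : U →ₗ[R] U ⊗[R] A} {ρV : V →ₗ[R] V ⊗[R] A} {ρW : W →ₗ[R] W ⊗[R] A}

lemma mem_intertwiners {f : V →ₗ[R] W} :
    f ∈ intertwiners ρV ρW ↔ ρW ∘ₗ f = f.rTensor A ∘ₗ ρV :=
  Iff.rfl

lemma comp_mem_intertwiners {f : U →ₗ[R] V} {g : V →ₗ[R] W} (hg : g ∈ intertwiners ρV ρW)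
    (hf : f ∈ intertwiners ρU ρV) : g ∘ₗ f ∈ intertwiners ρU ρW := by
  rw [mem_intertwiners] at *
  rw [← LinearMap.comp_assoc, hg, LinearMap.comp_assoc, hf, LinearMap.rTensor_comp,
    LinearMap.comp_assoc]

lemma symm_mem_intertwiners {φ : V ≃ₗ[R] W} (hφ : φ.toLinearMap ∈ intertwiners ρV ρW) :
    φ.symm.toLinearMap ∈ intertwiners ρW ρV := by
  rw [mem_intertwiners] at *
  rw [← LinearMap.cancel_right φ.surjective, LinearMap.comp_assoc, LinearMap.comp_assoc, hφ,
    ← LinearMap.comp_assoc, ← LinearMap.comp_assoc, ← LinearMap.rTensor_comp]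
  ext
  simp

lemma map_congrRight_intertwiners (ρU : U →ₗ[R] U ⊗[R] A) {φ : V ≃ₗ[R] W}
    (hφ : φ.toLinearMap ∈ intertwiners ρV ρW) :
    (intertwiners ρU ρV).map φ.congrRight.toLinearMap = intertwiners ρU ρW := by
  refine le_antisymm ?_ fun f hf =>
    ⟨φ.symm.toLinearMap ∘ₗ f, comp_mem_intertwiners (symm_mem_intertwiners hφ) hf,
      LinearMap.ext fun _ => φ.apply_symm_apply _⟩
  rintro _ ⟨f, hf, rfl⟩
  exact (comp_mem_intertwiners hφ hf : φ.toLinearMap ∘ₗ f ∈ _)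

end Intertwiners

section BaseChangeIntertwiners

open TensorProduct.AlgebraTensorModule

variable {R A V W : Type*} (S : Type*) [CommRing R] [CommRing S] [Algebra R S]
  [AddCommGroup A] [Module R A] [AddCommGroup V] [Module R V] [AddCommGroup W] [Module R W]

lemma baseChangeCoaction_eq (ρ : V →ₗ[R] V ⊗[R] A) :
    baseChangeCoaction R S A V ρ = (distribBaseChange R S V A).toLinearMap ∘ₗ ρ.baseChange S :=
  rfl

lemma rTensor_baseChange_comp_distribBaseChange (f : V →ₗ[R] W) :
    (f.baseChange S).rTensor (S ⊗[R] A) ∘ₗ (distribBaseChange R S V A).toLinearMap =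
      (distribBaseChange R S W A).toLinearMap ∘ₗ (f.rTensor A).baseChange S := by
  ext v a
  simp

lemma homBaseChange_intertwiners [Module.Flat R S] [Module.FinitePresentation R V]
    (ρV : V →ₗ[R] V ⊗[R] A) (ρW : W →ₗ[R] W ⊗[R] A) :
    homBaseChange S (intertwiners ρV ρW) =
      intertwiners (baseChangeCoaction R S A V ρV) (baseChangeCoaction R S A W ρW) := by
  let e := (distribBaseChange R S W A).congrRight (M := S ⊗[R] V)
  have e_apply (g : S ⊗[R] V →ₗ[S] S ⊗[R] (W ⊗[R] A)) :
      e g = (distribBaseChange R S W A).toLinearMap ∘ₗ g := rfl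
  have isBaseChange_e : IsBaseChange S
      (e.toLinearMap.restrictScalars R ∘ₗ LinearMap.baseChangeHom R S V (W ⊗[R] A)) :=
    .of_equiv ((Module.FinitePresentation.isBaseChange_map R V _ S).equiv ≪≫ₗ e) fun f => by
      simp [IsBaseChange.equiv_tmul]
  refine (eqLocus_eq_span_map_eqLocus (Module.FinitePresentation.isBaseChange_map R V W S)
    isBaseChange_e (fun f => ?_) fun f => ?_).symm
  · simp [e_apply, baseChangeCoaction_eq, LinearMap.llcomp_apply', LinearMap.baseChange_comp,
      LinearMap.comp_assoc]
  · simp [e_apply, baseChangeCoaction_eq, LinearMap.baseChange_comp, LinearMap.lcomp_apply',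
      ← LinearMap.comp_assoc, rTensor_baseChange_comp_distribBaseChange]

end BaseChangeIntertwiners

lemma exists_injective_mem_of_id_mem {k K V W : Type*} [Field k] [CommRing K]
    [Nontrivial K] [Algebra k K] [AddCommGroup V] [Module k V] [FiniteDimensional k V]
    [AddCommGroup W] [Module k W] [FiniteDimensional k W]
    {E : Submodule k (V →ₗ[k] V)} {L : Submodule k (V →ₗ[k] W)} (φ : (K ⊗[k] V) ≃ₗ[K] K ⊗[k] W)
    (hφ : (homBaseChange K E).map φ.congrRight.toLinearMap = homBaseChange K L)
    (hE : LinearMap.id ∈ E) :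
    ∃ f ∈ L, Function.Injective f := by
  rcases finite_or_infinite k with _ | _
  · exact exists_injective_mem_of_finite φ hφ ⟨_, hE, Function.injective_id⟩
  · refine exists_injective_mem_of_infinite φ ?_
    rw [← hφ]
    exact ⟨LinearMap.id, Submodule.subset_span ⟨_, hE, by simp⟩, rfl⟩

theorem isomorphic_of_baseChange_isomorphic_general
    (k K : Type*) [Field k] [CommRing K] [Nontrivial K] [Algebra k K]
    (A : Type*) [AddCommGroup A] [Module k A]
    (V W : Type*) [AddCommGroup V] [Module k V] [FiniteDimensional k V]
    [AddCommGroup W] [Module k W]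
    (ρV : V →ₗ[k] V ⊗[k] A) (ρW : W →ₗ[k] W ⊗[k] A)
    (h : ∃ φ : (K ⊗[k] V) ≃ₗ[K] (K ⊗[k] W), ∀ x : K ⊗[k] V,
      baseChangeCoaction k K A W ρW (φ x)
        = TensorProduct.map (φ : (K ⊗[k] V) →ₗ[K] K ⊗[k] W)
            (LinearMap.id : (K ⊗[k] A) →ₗ[K] K ⊗[k] A)
            (baseChangeCoaction k K A V ρV x)) :
    ∃ ψ : V ≃ₗ[k] W, ∀ v : V,
      ρW (ψ v) = TensorProduct.map (ψ : V →ₗ[k] W) (LinearMap.id : A →ₗ[k] A) (ρV v) := by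
  obtain ⟨φ, hφ⟩ := h
  have := Module.finitePresentation_of_finite k V
  have : Module.Finite K (K ⊗[k] W) := .equiv φ
  have : FiniteDimensional k W := .of_finite_tensorProduct_of_faithfullyFlat K
  have finrank_eq : finrank k V = finrank k W := by
    rw [← finrank_baseChange (R := K), φ.finrank_eq, finrank_baseChange]
  have map_eq : (homBaseChange K (intertwiners ρV ρV)).map φ.congrRight.toLinearMap =
      homBaseChange K (intertwiners ρV ρW) := by
    rw [homBaseChange_intertwiners, homBaseChange_intertwiners]
    exact map_congrRight_intertwiners _ (LinearMap.ext hφ)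
  obtain ⟨f, hf, f_injective⟩ := exists_injective_mem_of_id_mem φ map_eq
    (by simp [mem_intertwiners])
  exact ⟨.ofInjectiveOfFinrankEq f f_injective finrank_eq, LinearMap.congr_fun hf⟩

/-- **Noether–Deuring for affine group schemes.**  If `V ⊗_k K ≅ W ⊗_k K` as representations of
`G_K` over `K`, then `V ≅ W` as representations of `G` over `k`. -/
theorem isomorphic_of_baseChange_isomorphic
    (k K : Type*) [Field k] [Field K] [Algebra k K]
    (A : Type*) [CommRing A] [HopfAlgebra k A]
    (V W : Type*) [AddCommGroup V] [Module k V] [FiniteDimensional k V]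
    [AddCommGroup W] [Module k W] [FiniteDimensional k W]
    (ρV : CoalgebraComodule k A V) (ρW : CoalgebraComodule k A W)
    (h : ∃ φ : (K ⊗[k] V) ≃ₗ[K] (K ⊗[k] W), ∀ x : K ⊗[k] V,
      baseChangeCoaction k K A W ρW.ρ (φ x)
        = TensorProduct.map (φ : (K ⊗[k] V) →ₗ[K] K ⊗[k] W)
            (LinearMap.id : (K ⊗[k] A) →ₗ[K] K ⊗[k] A)
            (baseChangeCoaction k K A V ρV.ρ x)) :
    ∃ ψ : V ≃ₗ[k] W, ∀ v : V,
      ρW.ρ (ψ v)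
        = TensorProduct.map (ψ : V →ₗ[k] W) (LinearMap.id : A →ₗ[k] A) (ρV.ρ v) := by
  exact isomorphic_of_baseChange_isomorphic_general k K A V W ρV.ρ ρW.ρ h
end

section
/- Let k be a field, K/k a field extension, and G an affine group scheme over k. Then for any finite-dimensional representation V of G_K over K, there exists a finite-dimensional representation W of G over k and an injective morphism of G_K-representations V ↪ W ⊗_k K. -/
/-!
# Statement 2 (Representations of `G_K` embed into base changes of representations of `G`)

An affine group scheme `G` over a field `k` is modeled by its commutative Hopf algebra
`A = k[G]`; representations of `G` are comodules over `A`, and representations of the base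
change `G_K` are comodules over the base-changed Hopf algebra `K ⊗[k] A` over `K`.
The theorem: every finite-dimensional representation `V` of `G_K` over `K` admits an injective
morphism of `G_K`-representations `V ↪ W ⊗_k K` for some finite-dimensional representation `W`
of `G` over `k`.
-/

open scoped TensorProduct

/-- The comultiplication of the base-changed coalgebra `K ⊗[k] A` over `K`. -/
noncomputable def bcComul (k K A : Type*) [CommRing k] [CommRing K] [Algebra k K]
    [AddCommGroup A] [Module k A] [Coalgebra k A] :
    (K ⊗[k] A) →ₗ[K] (K ⊗[k] A) ⊗[K] (K ⊗[k] A) :=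
  baseChangeCoaction k K A A (Coalgebra.comul : A →ₗ[k] A ⊗[k] A)

/-- The counit of the base-changed coalgebra `K ⊗[k] A` over `K`. -/
noncomputable def bcCounit (k K A : Type*) [CommRing k] [CommRing K] [Algebra k K]
    [AddCommGroup A] [Module k A] [Coalgebra k A] :
    (K ⊗[k] A) →ₗ[K] K :=
  (TensorProduct.AlgebraTensorModule.rid k K K).toLinearMap ∘ₗ
    (Coalgebra.counit : A →ₗ[k] k).baseChange K

/-- A comodule over the base-changed coalgebra `K ⊗[k] A`, i.e. a representation over `K`
of the base-changed affine group scheme `G_K`. -/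
structure BaseChangeComodule (k K A : Type*) [CommRing k] [CommRing K] [Algebra k K]
    [AddCommGroup A] [Module k A] [Coalgebra k A]
    (V : Type*) [AddCommGroup V] [Module K V] where
  /-- the coaction map -/
  ρ : V →ₗ[K] V ⊗[K] (K ⊗[k] A)
  counit_comp : ∀ v : V,
    (TensorProduct.rid K V)
      ((TensorProduct.map (LinearMap.id : V →ₗ[K] V) (bcCounit k K A)) (ρ v)) = v
  coassoc : ∀ v : V,
    (TensorProduct.assoc K V (K ⊗[k] A) (K ⊗[k] A))
      ((TensorProduct.map ρ (LinearMap.id : (K ⊗[k] A) →ₗ[K] K ⊗[k] A)) (ρ v))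
      = (TensorProduct.map (LinearMap.id : V →ₗ[K] V) (bcComul k K A)) (ρ v)

/-!
The coaction of `V` is itself an embedding of `V` into the cofree comodule `V ⊗ K[G]`. Embedding
the module underlying `V` into `K ⊗ U`, with `U` free of finite rank over `k`, turns this into an
embedding of `V` into the base change of the cofree comodule `U ⊗ A` over `k`. The image of `V`
only involves finitely many elements of `U ⊗ A`, so it remains to see that comodules are locally
finite. If `S` lies in a comodule with coaction `ρ` and `ρ S ⊆ M ⊗ A` with `M` finitely generated,
then `S ⊆ ρ⁻¹(M ⊗ A)`; the counit gives `ρ⁻¹(M ⊗ A) ⊆ M`, and coassociativity together with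
flatness of `A` makes `ρ⁻¹(M ⊗ A)` a subcomodule.
-/

open LinearMap TensorProduct
open TensorProduct.AlgebraTensorModule (distribBaseChange)

universe u v w x y

section Naturality

variable {R M M' N P Q : Type*} [CommSemiring R] [AddCommMonoid M] [Module R M]
  [AddCommMonoid M'] [Module R M'] [AddCommMonoid N] [Module R N]
  [AddCommMonoid P] [Module R P] [AddCommMonoid Q] [Module R Q]

theorem rid_map_id_map_id (f : M →ₗ[R] M') (φ : N →ₗ[R] R) (t : M ⊗[R] N) :
    TensorProduct.rid R M' (map id φ (map f id t)) =
      f (TensorProduct.rid R M (map id φ t)) := by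
  induction t with
  | zero => simp
  | add s t hs ht => simp only [map_add, hs, ht]
  | tmul m n => simp

theorem assoc_map_assoc_symm_id (x : (M ⊗[R] (N ⊗[R] P)) ⊗[R] Q) :
    TensorProduct.assoc R (M ⊗[R] N) P Q
      (map (TensorProduct.assoc R M N P).symm.toLinearMap id x) =
    (TensorProduct.assoc R M N (P ⊗[R] Q)).symm
      (map id (TensorProduct.assoc R N P Q).toLinearMap
        (TensorProduct.assoc R M (N ⊗[R] P) Q x)) := by
  rw [assoc_tensor]
  exact congr((TensorProduct.assoc R M N (P ⊗[R] Q)).symm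
    (map id (TensorProduct.assoc R N P Q).toLinearMap (TensorProduct.assoc R M (N ⊗[R] P) Q
      $(((TensorProduct.assoc R M N P).rTensor Q).apply_symm_apply x))))

end Naturality

namespace CoalgebraComodule

variable {k A P W : Type*} [CommRing k] [AddCommGroup A] [Module k A] [Coalgebra k A]
  [AddCommGroup P] [Module k P] [AddCommGroup W] [Module k W]

/-- A submodule `N` is a subcomodule, that is, a subrepresentation, if the coaction maps it into
the image of `N ⊗ A`; this image is a copy of `N ⊗ A` when `A` is flat. -/
def IsSubcomodule (c : CoalgebraComodule k A P) (N : Submodule k P) : Prop :=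
  ∀ p ∈ N, c.ρ p ∈ range (map N.subtype (id : A →ₗ[k] A))

/-- The preimage of `M ⊗ A` under the coaction: the largest subcomodule contained in `M`, at
least when `A` is flat. It is encoded as the kernel of `P → P ⊗ A → (P ⧸ M) ⊗ A`. -/
def core (c : CoalgebraComodule k A P) (M : Submodule k P) : Submodule k P :=
  ker (map M.mkQ (id : A →ₗ[k] A) ∘ₗ c.ρ)

theorem mem_core_iff {c : CoalgebraComodule k A P} {M : Submodule k P} {p : P} :
    p ∈ c.core M ↔ c.ρ p ∈ range (map M.subtype (id : A →ₗ[k] A)) := by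
  have hrange : range (map M.subtype (id : A →ₗ[k] A)) = ker (map M.mkQ id) :=
    (rTensor_mkQ A M).symm
  rw [hrange, core, mem_ker, mem_ker, LinearMap.comp_apply]

theorem core_le (c : CoalgebraComodule k A P) (M : Submodule k P) : c.core M ≤ M := by
  intro p hp
  rw [← M.ker_mkQ, mem_ker, ← c.counit_comp p, ← rid_map_id_map_id, ← LinearMap.comp_apply _ c.ρ,
    mem_ker.1 hp, map_zero, map_zero]

theorem isSubcomodule_core [Module.Flat k A] (c : CoalgebraComodule k A P) (M : Submodule k P) :
    c.IsSubcomodule (c.core M) := by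
  intro p hp
  have hexact := Module.Flat.rTensor_exact A
    (exact_subtype_ker_map (map M.mkQ (id : A →ₗ[k] A) ∘ₗ c.ρ))
  refine (hexact (c.ρ p)).1 ((TensorProduct.assoc k (P ⧸ M) A A).injective ?_)
  calc TensorProduct.assoc k (P ⧸ M) A A (map (map M.mkQ id ∘ₗ c.ρ) id (c.ρ p))
      = map M.mkQ id (TensorProduct.assoc k P A A (map c.ρ id (c.ρ p))) := by
        rw [← TensorProduct.map_id, map_map_assoc, map_map, id_comp]
    _ = map id Coalgebra.comul (map M.mkQ id (c.ρ p)) := by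
        rw [c.coassoc, map_map, map_map, id_comp, id_comp, comp_id, comp_id]
    _ = TensorProduct.assoc k (P ⧸ M) A A 0 := by
        rw [← LinearMap.comp_apply _ c.ρ, mem_ker.1 hp, map_zero, map_zero]

theorem exists_fg_isSubcomodule [IsNoetherianRing k] [Module.Flat k A]
    (c : CoalgebraComodule k A P) {S : Submodule k P} (hS : S.FG) :
    ∃ N : Submodule k P, N.FG ∧ S ≤ N ∧ c.IsSubcomodule N := by
  obtain ⟨s, rfl⟩ := hS
  obtain ⟨M, _, hsM⟩ := exists_finite_submodule_left_of_setFinite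
    (c.ρ '' s) (s.finite_toSet.image _)
  have hM : IsNoetherian k M := inferInstance
  exact ⟨c.core M, (isNoetherian_submodule.1 hM) _ (c.core_le M),
    Submodule.span_le.2 fun p hp ↦ mem_core_iff.2 (hsM ⟨p, hp, rfl⟩),
    c.isSubcomodule_core M⟩

theorem exists_comodule_of_injective [Module.Flat k A] (c : CoalgebraComodule k A P)
    {i : W →ₗ[k] P} (hi : Function.Injective i)
    (hρ : ∀ w, c.ρ (i w) ∈ range (map i (id : A →ₗ[k] A))) :
    ∃ cW : CoalgebraComodule k A W, ∀ w, map i (id : A →ₗ[k] A) (cW.ρ w) = c.ρ (i w) := by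
  have hiA : Function.Injective (map i (id : A →ₗ[k] A)) :=
    Module.Flat.rTensor_preserves_injective_linearMap i hi
  have hiAA : Function.Injective (map i (id : A ⊗[k] A →ₗ[k] A ⊗[k] A)) :=
    Module.Flat.rTensor_preserves_injective_linearMap i hi
  let r : W →ₗ[k] W ⊗[k] A := codRestrictOfInjective (c.ρ ∘ₗ i) _ hiA hρ
  have hr : map i id ∘ₗ r = c.ρ ∘ₗ i := codRestrictOfInjective_comp _ _ hiA hρ
  have hr_apply (w : W) : map i id (r w) = c.ρ (i w) := congr($hr w)
  refine ⟨⟨r, fun w ↦ hi ?_, fun w ↦ hiAA ?_⟩, hr_apply⟩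
  · rw [← rid_map_id_map_id, hr_apply, c.counit_comp]
  · calc map i id (TensorProduct.assoc k W A A (map r id (r w)))
        = TensorProduct.assoc k P A A (map c.ρ id (map i id (r w))) := by
          rw [← TensorProduct.map_id, map_map_assoc, map_map, map_map, hr]
      _ = map id Coalgebra.comul (map i id (r w)) := by
          rw [hr_apply, c.coassoc]
      _ = map i id (map id Coalgebra.comul (r w)) := by
          simp only [map_map, id_comp, comp_id]

variable (k A) in
/-- The cofree comodule `U ⊗ A`, with coaction `id ⊗ Δ`: for `U` free of rank `n` it is the sum
of `n` copies of the regular representation. -/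
noncomputable def cofree (U : Type*) [AddCommGroup U] [Module k U] :
    CoalgebraComodule k A (U ⊗[k] A) where
  ρ := (TensorProduct.assoc k U A A).symm.toLinearMap ∘ₗ map id Coalgebra.comul
  counit_comp t := by
    induction t with
    | zero => simp
    | add s t hs ht => simp only [map_add, hs, ht]
    | tmul u a =>
      have hcounit : map id Coalgebra.counit (Coalgebra.comul a) = a ⊗ₜ[k] (1 : k) :=
        Coalgebra.lTensor_counit_comul a
      rw [LinearMap.comp_apply, LinearEquiv.coe_coe, map_tmul, ← TensorProduct.map_id,
        map_map_assoc_symm, map_tmul, hcounit]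
      simp
  coassoc t := by
    have hcoassoc : (TensorProduct.assoc k A A A).toLinearMap ∘ₗ map Coalgebra.comul id ∘ₗ
        Coalgebra.comul = map id Coalgebra.comul ∘ₗ Coalgebra.comul (R := k) :=
      Coalgebra.coassoc
    set α := TensorProduct.assoc k U A A
    set β := TensorProduct.assoc k U A (A ⊗[k] A)
    set Δt := map id Coalgebra.comul t with hΔt
    calc TensorProduct.assoc k (U ⊗[k] A) A A
          (map (α.symm.toLinearMap ∘ₗ map id Coalgebra.comul) id (α.symm Δt))
        = β.symm (map id (TensorProduct.assoc k A A A).toLinearMap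
            (TensorProduct.assoc k U (A ⊗[k] A) A
              (map (map id Coalgebra.comul) id (α.symm Δt)))) := by
          rw [← assoc_map_assoc_symm_id, map_map, id_comp]
      _ = β.symm (map id ((TensorProduct.assoc k A A A).toLinearMap ∘ₗ map Coalgebra.comul id ∘ₗ
            Coalgebra.comul) t) := by
          rw [← map_map_assoc, LinearEquiv.apply_symm_apply, hΔt]
          simp only [map_map, id_comp]
      _ = β.symm (map id (map id Coalgebra.comul) Δt) := by
          rw [hcoassoc, hΔt, map_map, id_comp]
      _ = map id Coalgebra.comul (α.symm Δt) := by
          rw [← map_map_assoc_symm, TensorProduct.map_id]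

end CoalgebraComodule

section DistribBaseChange

variable {k : Type*} (K : Type*) [CommSemiring k] [CommSemiring K] [Algebra k K]

theorem distribBaseChange_baseChange_map {M M' N N' : Type*} [AddCommMonoid M] [Module k M]
    [AddCommMonoid M'] [Module k M'] [AddCommMonoid N] [Module k N] [AddCommMonoid N'] [Module k N']
    (f : M →ₗ[k] M') (g : N →ₗ[k] N') (x : K ⊗[k] (M ⊗[k] N)) :
    distribBaseChange k K M' N' ((map f g).baseChange K x) =
      map (f.baseChange K) (g.baseChange K) (distribBaseChange k K M N x) := by
  suffices h : (distribBaseChange k K M' N').toLinearMap ∘ₗ (map f g).baseChange K =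
      map (f.baseChange K) (g.baseChange K) ∘ₗ (distribBaseChange k K M N).toLinearMap from
    congr($h x)
  ext
  simp

theorem distribBaseChange_assoc_symm {M N P : Type*} [AddCommMonoid M] [Module k M]
    [AddCommMonoid N] [Module k N] [AddCommMonoid P] [Module k P] (x : K ⊗[k] (M ⊗[k] (N ⊗[k] P))) :
    map (distribBaseChange k K M N).toLinearMap id
      (distribBaseChange k K (M ⊗[k] N) P
        ((TensorProduct.assoc k M N P).symm.toLinearMap.baseChange K x)) =
    (TensorProduct.assoc K (K ⊗[k] M) (K ⊗[k] N) (K ⊗[k] P)).symm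
      (map id (distribBaseChange k K N P).toLinearMap (distribBaseChange k K M (N ⊗[k] P) x)) := by
  suffices h : map (distribBaseChange k K M N).toLinearMap id ∘ₗ
        (distribBaseChange k K (M ⊗[k] N) P).toLinearMap ∘ₗ
        (TensorProduct.assoc k M N P).symm.toLinearMap.baseChange K =
      (TensorProduct.assoc K (K ⊗[k] M) (K ⊗[k] N) (K ⊗[k] P)).symm.toLinearMap ∘ₗ
        map id (distribBaseChange k K N P).toLinearMap ∘ₗ
          (distribBaseChange k K M (N ⊗[k] P)).toLinearMap from
    congr($h x)
  ext
  simp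

end DistribBaseChange

theorem exists_fg_range_le_range_baseChange {k K V P : Type*} [CommSemiring k] [Semiring K]
    [Algebra k K] [AddCommMonoid V] [Module K V] [Module.Finite K V] [AddCommMonoid P] [Module k P]
    (g : V →ₗ[K] K ⊗[k] P) :
    ∃ S : Submodule k P, S.FG ∧ range g ≤ range (S.subtype.baseChange K) := by
  obtain ⟨s, hs⟩ := Module.Finite.fg_top (R := K) (M := V)
  obtain ⟨S, hS, hgS⟩ := exists_finite_submodule_right_of_setFinite (g '' s)
    (s.finite_toSet.image g)
  refine ⟨S, Module.Finite.iff_fg.1 hS, ?_⟩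
  rw [range_eq_map, ← hs, Submodule.map_span, Submodule.span_le]
  exact hgS

section BaseChange

variable {k K A : Type*} [CommRing k] [CommRing K] [Algebra k K] [AddCommGroup A] [Module k A]

theorem baseChangeCoaction_apply {M : Type*} [AddCommGroup M] [Module k M]
    (ρ : M →ₗ[k] M ⊗[k] A) (x : K ⊗[k] M) :
    baseChangeCoaction k K A M ρ x = distribBaseChange k K M A (ρ.baseChange K x) :=
  rfl

theorem baseChangeCoaction_baseChange {M N : Type*} [AddCommGroup M] [Module k M]
    [AddCommGroup N] [Module k N] {f : M →ₗ[k] N} {ρM : M →ₗ[k] M ⊗[k] A}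
    {ρN : N →ₗ[k] N ⊗[k] A} (hf : map f id ∘ₗ ρM = ρN ∘ₗ f) (x : K ⊗[k] M) :
    baseChangeCoaction k K A N ρN (f.baseChange K x) =
      map (f.baseChange K) id (baseChangeCoaction k K A M ρM x) := by
  rw [baseChangeCoaction_apply, baseChangeCoaction_apply, ← LinearMap.comp_apply, ← baseChange_comp,
    ← hf, baseChange_comp, LinearMap.comp_apply, distribBaseChange_baseChange_map, baseChange_id]

variable [Coalgebra k A]

theorem distribBaseChange_baseChangeCoaction_cofree {U : Type*} [AddCommGroup U] [Module k U]
    (x : K ⊗[k] (U ⊗[k] A)) :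
    map (distribBaseChange k K U A).toLinearMap id
      (baseChangeCoaction k K A _ (CoalgebraComodule.cofree k A U).ρ x) =
    (TensorProduct.assoc K (K ⊗[k] U) (K ⊗[k] A) (K ⊗[k] A)).symm
      (map id (bcComul k K A) (distribBaseChange k K U A x)) := by
  have hbcComul : bcComul k K A =
      (distribBaseChange k K A A).toLinearMap ∘ₗ Coalgebra.comul.baseChange K := rfl
  rw [baseChangeCoaction_apply, CoalgebraComodule.cofree, baseChange_comp, LinearMap.comp_apply,
    distribBaseChange_assoc_symm, distribBaseChange_baseChange_map, map_map, hbcComul,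
    baseChange_id, id_comp]

variable {V : Type*} [AddCommGroup V] [Module K V]

theorem exists_embedding_into_baseChange_cofree (ρ : BaseChangeComodule k K A V) {U : Type*}
    [AddCommGroup U] [Module k U] {j : V →ₗ[K] K ⊗[k] U} (hj : Function.Injective j) :
    ∃ g : V →ₗ[K] K ⊗[k] (U ⊗[k] A), Function.Injective g ∧
      ∀ v, baseChangeCoaction k K A _ (CoalgebraComodule.cofree k A U).ρ (g v) =
        map g id (ρ.ρ v) := by
  let g : V →ₗ[K] K ⊗[k] (U ⊗[k] A) :=
    (distribBaseChange k K U A).symm.toLinearMap ∘ₗ map j id ∘ₗ ρ.ρ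
  have hDg : (distribBaseChange k K U A).toLinearMap ∘ₗ g = map j id ∘ₗ ρ.ρ := by
    ext v; simp [g]
  have hDg_apply (v : V) : distribBaseChange k K U A (g v) = map j id (ρ.ρ v) := congr($hDg v)
  refine ⟨g, fun v w hvw ↦ hj ?_, fun v ↦ ?_⟩
  · have hcounit (v : V) :
        TensorProduct.rid K _ (map id (bcCounit k K A) (distribBaseChange k K U A (g v))) =
          j v := by
      rw [hDg_apply, rid_map_id_map_id, ρ.counit_comp]
    rw [← hcounit v, ← hcounit w, hvw]
  · have hD : Function.Injective
        (map (distribBaseChange k K U A).toLinearMap (id : K ⊗[k] A →ₗ[K] K ⊗[k] A)) :=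
      (LinearEquiv.rTensor (K ⊗[k] A) (distribBaseChange k K U A)).injective
    apply hD
    rw [distribBaseChange_baseChangeCoaction_cofree, LinearEquiv.symm_apply_eq]
    calc map id (bcComul k K A) (distribBaseChange k K U A (g v))
        = map j id (map id (bcComul k K A) (ρ.ρ v)) := by
          simp only [hDg_apply, map_map, id_comp, comp_id]
      _ = TensorProduct.assoc K _ _ _ (map (map j id ∘ₗ ρ.ρ) id (ρ.ρ v)) := by
          rw [← ρ.coassoc, ← TensorProduct.map_id, map_map_assoc, map_map, id_comp]
      _ = TensorProduct.assoc K _ _ _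
            (map (distribBaseChange k K U A).toLinearMap id (map g id (ρ.ρ v))) := by
          rw [map_map, hDg, id_comp]

theorem exists_embedding_into_baseChange_of_injective [Module.Flat k A] [Module.Flat k K]
    {ρ : V →ₗ[K] V ⊗[K] (K ⊗[k] A)} {P W : Type*} [AddCommGroup P] [Module k P] [AddCommGroup W]
    [Module k W] {c : CoalgebraComodule k A P} {g : V →ₗ[K] K ⊗[k] P} (hg : Function.Injective g)
    (hρ : ∀ v, baseChangeCoaction k K A P c.ρ (g v) = map g id (ρ v))
    {i : W →ₗ[k] P} (hi : Function.Injective i)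
    (hiρ : ∀ w, c.ρ (i w) ∈ range (map i (id : A →ₗ[k] A)))
    (hgi : ∀ v, g v ∈ range (i.baseChange K)) :
    ∃ (cW : CoalgebraComodule k A W) (g' : V →ₗ[K] K ⊗[k] W), Function.Injective g' ∧
      ∀ v, baseChangeCoaction k K A W cW.ρ (g' v) = map g' id (ρ v) := by
  obtain ⟨cW, hcW⟩ := c.exists_comodule_of_injective hi hiρ
  have hiK : Function.Injective (i.baseChange K) :=
    Module.Flat.lTensor_preserves_injective_linearMap i hi
  have hiKA : Function.Injective (map (i.baseChange K) (id : K ⊗[k] A →ₗ[K] K ⊗[k] A)) :=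
    Module.Flat.rTensor_preserves_injective_linearMap _ hiK
  let g' : V →ₗ[K] K ⊗[k] W := codRestrictOfInjective g _ hiK hgi
  have hg' : i.baseChange K ∘ₗ g' = g := codRestrictOfInjective_comp g _ hiK hgi
  refine ⟨cW, g', .of_comp (f := i.baseChange K) ?_, fun v ↦ hiKA ?_⟩
  · rwa [← LinearMap.coe_comp, hg']
  · rw [← baseChangeCoaction_baseChange (LinearMap.ext hcW), map_map, hg', id_comp, ← hρ,
      ← hg', LinearMap.comp_apply]

theorem exists_embedding_into_baseChange_fg_submodule [IsNoetherianRing k] [Module.Flat k A]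
    [Module.Flat k K] [Module.Finite K V] {ρ : V →ₗ[K] V ⊗[K] (K ⊗[k] A)} {P : Type*}
    [AddCommGroup P] [Module k P] {c : CoalgebraComodule k A P} {g : V →ₗ[K] K ⊗[k] P}
    (hg : Function.Injective g)
    (hρ : ∀ v, baseChangeCoaction k K A P c.ρ (g v) = map g id (ρ v)) :
    ∃ N : Submodule k P, N.FG ∧ ∃ (cN : CoalgebraComodule k A N) (g' : V →ₗ[K] K ⊗[k] N),
      Function.Injective g' ∧
        ∀ v, baseChangeCoaction k K A N cN.ρ (g' v) = map g' id (ρ v) := by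
  obtain ⟨S, hS, hgS⟩ := exists_fg_range_le_range_baseChange g
  obtain ⟨N, hN, hSN, hNρ⟩ := c.exists_fg_isSubcomodule hS
  have hgN (v : V) : g v ∈ range (N.subtype.baseChange K) := by
    rw [← Submodule.subtype_comp_inclusion S N hSN, baseChange_comp] at hgS
    exact range_comp_le_range _ _ (hgS ⟨v, rfl⟩)
  exact ⟨N, hN, exists_embedding_into_baseChange_of_injective hg hρ N.injective_subtype
    (fun p ↦ hNρ p p.2) hgN⟩

end BaseChange

theorem exists_embedding_into_baseChange_general
    {k : Type u} {K : Type v} [CommRing k] [IsNoetherianRing k] [CommRing K] [Algebra k K]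
    [Module.Flat k K] {A : Type w} [AddCommGroup A] [Module k A] [Coalgebra k A] [Module.Flat k A]
    {V : Type x} [AddCommGroup V] [Module K V] [Module.Finite K V] [Module.Projective K V]
    (ρ : BaseChangeComodule k K A V) :
    ∃ W : ModuleCat.{max u w y} k, Module.Finite k W ∧
      ∃ (ρW : CoalgebraComodule k A W) (g : V →ₗ[K] K ⊗[k] W),
        Function.Injective g ∧
        ∀ v : V, baseChangeCoaction k K A W ρW.ρ (g v) = map g id (ρ.ρ v) := by
  obtain ⟨n, _, j, -, hj, -⟩ := Module.Finite.exists_comp_eq_id_of_projective K V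
  let e : (Fin n → K) ≃ₗ[K] K ⊗[k] (Fin n → k) := (piScalarRight k K K (Fin n)).symm
  obtain ⟨g, hg, hgρ⟩ := exists_embedding_into_baseChange_cofree ρ (j := e.toLinearMap ∘ₗ j)
    (e.injective.comp hj)
  obtain ⟨N, hN, cN, g', hg', hgρ'⟩ := exists_embedding_into_baseChange_fg_submodule hg hgρ
  have hNfin : Module.Finite k N := Module.Finite.iff_fg.2 hN
  let l : ULift.{y} N ≃ₗ[k] N := ULift.moduleEquiv
  exact ⟨ModuleCat.of k (ULift.{y} N), inferInstanceAs (Module.Finite k (ULift N)),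
    exists_embedding_into_baseChange_of_injective hg' hgρ' (i := l.toLinearMap) l.injective
      (fun x ↦ (l.rTensor A).surjective (cN.ρ (l x))) fun v ↦ (l.lTensor K).surjective (g' v)⟩

/-- Every finite-dimensional representation `V` of `G_K` over `K` embeds, as a representation
of `G_K`, into `W ⊗_k K` for some finite-dimensional representation `W` of `G` over `k`. -/
theorem exists_embedding_into_baseChange
    (k K : Type) [Field k] [Field K] [Algebra k K]
    (A : Type) [CommRing A] [HopfAlgebra k A]
    (V : Type) [AddCommGroup V] [Module K V] [FiniteDimensional K V]
    (ρ : BaseChangeComodule k K A V) :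
    ∃ W : ModuleCat k, FiniteDimensional k W ∧
      ∃ (ρW : CoalgebraComodule k A W) (g : V →ₗ[K] K ⊗[k] W),
        Function.Injective g ∧
        ∀ v : V, baseChangeCoaction k K A W ρW.ρ (g v)
          = TensorProduct.map g (LinearMap.id : (K ⊗[k] A) →ₗ[K] K ⊗[k] A) (ρ.ρ v) :=
  exists_embedding_into_baseChange_general.{0, 0, 0, 0} ρ
end
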